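/- Let w ∈ 𝒱 be a generalized snake word of length n, and let t be the number of indices i with 2 ≤ i ≤ n and w_{i−1} ≠ w_i (for w ∈ 𝒱 these are exactly the turns of w, i.e., occurrences of LLR or RRL, with the convention that the empty letter w_0 = ε matches w_1). Then every circuit Z of the vertex set V(Q_w) of the order polytope O(Q_w) satisfies 4 ≤ |Z| ≤ 4 + 2t; moreover there exists a circuit with exactly 4 elements and there exists a circuit with exactly 4 + 2t elements. -/

import Mathlib

/-- The two-letter alphabet `{L, R}` for generalized snake words. -/
inductive Letter : Type
  | L
  | R
  deriving DecidableEq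

/-- The element of the generalized snake poset covered by `2m+2` (besides the relations
coming from `2m+3`): it is `2m-1` when the word turns at the `m`-th letter
(i.e. `m = 1` and `w 1 = L`, or `m ≥ 2` and `w (m-1) ≠ w m`), and `2m` otherwise. -/
def snakeSide (w : ℕ → Letter) (m : ℕ) : ℕ :=
  if (m = 1 ∧ w 1 = Letter.L) ∨ (2 ≤ m ∧ w (m - 1) ≠ w m) then 2 * m - 1 else 2 * m

/-- The covering relation of the generalized snake poset `P(w)` for the word
`ε w₁ ⋯ w_n` (the letter `w i` for `1 ≤ i ≤ n` is the `i`-th letter).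
`SnakeCov n w a b` means `a ≺ b`, i.e. `a` is covered by `b`. -/
inductive SnakeCov (n : ℕ) (w : ℕ → Letter) : ℕ → ℕ → Prop
  | cov10 : SnakeCov n w 1 0
  | cov20 : SnakeCov n w 2 0
  | cov31 : SnakeCov n w 3 1
  | cov32 : SnakeCov n w 3 2
  | covOdd (m : ℕ) (h1 : 1 ≤ m) (h2 : m ≤ n) : SnakeCov n w (2 * m + 3) (2 * m + 1)
  | covBot (m : ℕ) (h1 : 1 ≤ m) (h2 : m ≤ n) : SnakeCov n w (2 * m + 3) (2 * m + 2)
  | covSide (m : ℕ) (h1 : 1 ≤ m) (h2 : m ≤ n) : SnakeCov n w (2 * m + 2) (snakeSide w m)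

/-- The order relation of the generalized snake poset `P(w)` on `{0, …, 2n+3}`:
the reflexive-transitive closure of the covering relation. -/
def SnakeLE (n : ℕ) (w : ℕ → Letter) : ℕ → ℕ → Prop :=
  Relation.ReflTransGen (SnakeCov n w)

theorem snakeCov_lt {n : ℕ} {w : ℕ → Letter} {a b : ℕ} (h : SnakeCov n w a b) : b < a := by
  cases h
  case covSide m h1 h2 => unfold snakeSide; split <;> omega
  all_goals omega

theorem snakeLE_le {n : ℕ} {w : ℕ → Letter} {a b : ℕ} (h : SnakeLE n w a b) : b ≤ a := by
  induction h with
  | refl => exact le_refl a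
  | tail _ hc ih => exact le_trans (le_of_lt (snakeCov_lt hc)) ih

/-- The generalized snake poset `P(ε w₁ ⋯ w_n)` as a type: its elements are `0, 1, …, 2n+3`. -/
def SnakePoset (n : ℕ) (w : ℕ → Letter) : Type := Fin (2 * n + 4)

instance (n : ℕ) (w : ℕ → Letter) : PartialOrder (SnakePoset n w) where
  le a b := SnakeLE n w a.1 b.1
  le_refl _ := Relation.ReflTransGen.refl
  le_trans _ _ _ h1 h2 := Relation.ReflTransGen.trans h1 h2
  le_antisymm a b h1 h2 := Fin.ext (Nat.le_antisymm (snakeLE_le h2) (snakeLE_le h1))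

/-- The number of linear extensions of `P(ε w₁ ⋯ w_n)`: order-preserving bijections
onto the chain `Fin (2n+4)`.  By Stanley's theorem this is the normalized volume of
the order polytope `O(P(w))`. -/
noncomputable def linExtCount (n : ℕ) (w : ℕ → Letter) : ℕ :=
  Nat.card {f : SnakePoset n w ≃ Fin (2 * n + 4) //
    ∀ a b : SnakePoset n w, a ≤ b → f a ≤ f b}

/-- The collection of filters (upper order ideals) of `P(ε w₁ ⋯ w_n)`,
as subsets of `{0, …, 2n+3} ⊆ ℕ`. -/
def SnakeFilters (n : ℕ) (w : ℕ → Letter) : Set (Set ℕ) :=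
  {A | (∀ a ∈ A, a < 2 * n + 4) ∧ ∀ a ∈ A, ∀ b, SnakeLE n w a b → b ∈ A}

/-- The filter of `P(ε w₁ ⋯ w_n)` generated by a set `S`: its upward closure. -/
def snakeUp (n : ℕ) (w : ℕ → Letter) (S : Set ℕ) : Set ℕ :=
  {b | ∃ a ∈ S, SnakeLE n w a b}

/-- The alternating word `L R L R ⋯` (letter `i` is `L` for odd `i`),
defining the snake poset `S_n = P(ε L R L R ⋯)`. -/
def altWord : ℕ → Letter := fun i => if i % 2 = 1 then Letter.L else Letter.R

/-- Flipping a letter `L ↔ R`. -/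
def Letter.flip : Letter → Letter
  | Letter.L => Letter.R
  | Letter.R => Letter.L

/-- The swap operation `f_i`: flip all letters with index `≥ i`. -/
def swapFrom (w : ℕ → Letter) (i : ℕ) : ℕ → Letter :=
  fun j => if i ≤ j then (w j).flip else w j

/-- Membership in `𝒱`: the letter sequence `w₁ ⋯ w_n` contains neither `LRL` nor
`RLR` as a consecutive substring. -/
def InV (n : ℕ) (w : ℕ → Letter) : Prop :=
  ∀ i, 1 ≤ i → i + 2 ≤ n → w i = w (i + 1) ∨ w (i + 1) = w (i + 2)

/-- The order on `{0, …, 2n+5}` making `P̂(w)`: the poset `P(w)` (elements `0, …, 2n+3`)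
with a new maximum `2n+4` and a new minimum `2n+5` adjoined. -/
def SnakeHatLE (n : ℕ) (w : ℕ → Letter) (a b : ℕ) : Prop :=
  a = 2 * n + 5 ∨ b = 2 * n + 4 ∨ (a < 2 * n + 4 ∧ b < 2 * n + 4 ∧ SnakeLE n w a b)

/-- The lattice `P̂(w)`: `P(w)` with a new minimum `0̂ = 2n+5` and maximum `1̂ = 2n+4`. -/
def SnakeHat (n : ℕ) (w : ℕ → Letter) : Type := Fin (2 * n + 6)

instance (n : ℕ) (w : ℕ → Letter) : PartialOrder (SnakeHat n w) where
  le a b := SnakeHatLE n w a.1 b.1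
  le_refl a := by
    by_cases h5 : a.1 = 2 * n + 5
    · exact Or.inl h5
    · by_cases h4 : a.1 = 2 * n + 4
      · exact Or.inr (Or.inl h4)
      · have := a.2
        exact Or.inr (Or.inr ⟨by omega, by omega, Relation.ReflTransGen.refl⟩)
  le_trans a b c hab hbc := by
    rcases hab with h | h | ⟨ha, hb, hab⟩
    · exact Or.inl h
    · rcases hbc with h' | h' | ⟨hb', hc, hbc⟩
      · exact absurd h' (by omega)
      · exact Or.inr (Or.inl h')
      · exact absurd h (by omega)
    · rcases hbc with h' | h' | ⟨hb', hc, hbc⟩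
      · exact absurd h' (by omega)
      · exact Or.inr (Or.inl h')
      · exact Or.inr (Or.inr ⟨ha, hc, Relation.ReflTransGen.trans hab hbc⟩)
  le_antisymm a b h1 h2 := by
    apply Fin.ext
    rcases h1 with h | h | ⟨ha, hb, hab⟩ <;>
      rcases h2 with h' | h' | ⟨ha', hb', hba⟩ <;>
        first
          | omega
          | exact Nat.le_antisymm (snakeLE_le hba) (snakeLE_le hab)

/-- An element `x` of a (finite) lattice is meet-irreducible if it is not the maximum
element and whenever `x` is the meet (greatest lower bound) of `y` and `z`,
one has `x = y` or `x = z`. -/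
def MeetIrred {α : Type*} [PartialOrder α] (x : α) : Prop :=
  ¬IsTop x ∧ ∀ y z : α, IsGLB {y, z} x → x = y ∨ x = z

/-- The poset `Q_w` of meet-irreducible elements of `P̂(w)`, as an induced subposet. -/
abbrev SnakeQ (n : ℕ) (w : ℕ → Letter) : Type :=
  {x : SnakeHat n w // MeetIrred x}

/-- The vertex set of the order polytope `O(α)` of a finite poset `α`: the 0/1 indicator
vectors of the filters of `α`. -/
def OPVertexSet (α : Type*) [PartialOrder α] : Set (α → ℝ) :=
  {v | ∃ A : Set α, (∀ a ∈ A, ∀ b, a ≤ b → b ∈ A) ∧ v = A.indicator fun _ => (1 : ℝ)}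

/-- A circuit of a point configuration: an affinely dependent set all of whose proper
subsets are affinely independent. -/
def IsAffCircuit {α : Type*} (Z : Set (α → ℝ)) : Prop :=
  ¬AffineIndependent ℝ (Subtype.val : Z → (α → ℝ)) ∧
    ∀ Y : Set (α → ℝ), Y ⊂ Z → AffineIndependent ℝ (Subtype.val : Y → (α → ℝ))

/-- The adjacency relation of the graph `G(w)` on vertices `{0, 1, …, n}`:
consecutive indices are adjacent, and `i` and `i+2` are adjacent when
`w (i+1) ≠ w (i+2)` (a turn of the word). -/
def snakeAdj (n : ℕ) (w : ℕ → Letter) (i j : ℕ) : Prop :=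
  (j = i + 1 ∧ j ≤ n) ∨ (i = j + 1 ∧ i ≤ n) ∨
    (j = i + 2 ∧ j ≤ n ∧ w (i + 1) ≠ w (i + 2)) ∨
    (i = j + 2 ∧ i ≤ n ∧ w (j + 1) ≠ w (j + 2))

/-- `𝒢(w)`: the collection of nonempty subsets of `{0, …, n}` inducing connected
subgraphs of `G(w)`. -/
def GSets (n : ℕ) (w : ℕ → Letter) : Set (Set ℕ) :=
  {S | S.Nonempty ∧ (∀ i ∈ S, i ≤ n) ∧
    ∀ a ∈ S, ∀ b ∈ S,
      Relation.ReflTransGen (fun x y => x ∈ S ∧ y ∈ S ∧ snakeAdj n w x y) a b}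

/-!
Circuits of a point configuration are the supports of the elementary vectors of its space of affine
relations. By Birkhoff's theorem the vertices of `O(Q_w)` correspond to the elements of the
distributive lattice `P̂(w)`, and Möbius inversion along the lattice order shows that the affine
relations among them are spanned by the `n + 1` squares of the lattice, a strip that bends at each
of the `t` turns of `w`. Some coordinate separates the support of a nonzero relation among distinct
0/1 vectors, and the coefficients sum to zero over each of the two parts, so every part has at least
two elements; hence a circuit has at least `4` elements, and every square is a circuit.

If no two turns are adjacent, the vertices can be grouped into blocks in such a way that each square
has its entries `+1` and `-1` cancelling within every block. The support of a relation therefore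
meets a block in no point or in at least two, and comparing this with the dimension `n + 1` of the
space of relations bounds the support of an elementary vector by `4 + 2t`. The sum of all squares
attains the bound.
-/

section ElementaryVectors

variable {K ι : Type*} [Field K] {S : Submodule K (ι → K)} {l : ι → K}

/-- The elementary vectors of a subspace `S` of `ι → K`: nonzero vectors of `S` whose support is
inclusion-minimal. Their supports are the circuits of the matroid represented by `S`. -/
def IsElementary (S : Submodule K (ι → K)) (l : ι → K) : Prop :=
  MinimalFor (fun l ↦ l ∈ S ∧ l ≠ 0) Function.support l

theorem ncard_support_eq_card_filter {M : Type*} [Zero M] [DecidableEq M] [Fintype ι] (f : ι → M) :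
    f.support.ncard = (Finset.univ.filter fun i ↦ f i ≠ 0).card := by
  rw [← Set.ncard_coe_finset, Finset.coe_filter_univ]
  rfl

theorem two_le_card_filter_ne_zero_of_sum_eq_zero {M : Type*} [AddCommMonoid M] [DecidableEq M]
    {s : Finset ι} {f : ι → M} (hsum : ∑ i ∈ s, f i = 0) {i : ι} (hi : i ∈ s) (hfi : f i ≠ 0) :
    2 ≤ (s.filter fun i ↦ f i ≠ 0).card := by
  have hmem : i ∈ s.filter fun i ↦ f i ≠ 0 := Finset.mem_filter.2 ⟨hi, hfi⟩
  by_contra! hcard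
  obtain ⟨j, hj⟩ : ∃ j, s.filter (fun i ↦ f i ≠ 0) = {j} :=
    Finset.card_eq_one.1 (by have := Finset.card_pos.2 ⟨i, hmem⟩; omega)
  obtain rfl : i = j := by simpa [hj] using hmem
  rw [← Finset.sum_filter_ne_zero, hj, Finset.sum_singleton] at hsum
  exact hfi hsum

theorem isElementary_of_forall_ncard_le [Finite ι] (hl : l ∈ S) (hl0 : l ≠ 0)
    (hmin : ∀ l' ∈ S, l' ≠ 0 → l.support.ncard ≤ l'.support.ncard) : IsElementary S l :=
  ⟨⟨hl, hl0⟩, fun l' hl' hsub ↦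
    (Set.eq_of_subset_of_ncard_le hsub (hmin l' hl'.1 hl'.2)).ge⟩

theorem isElementary_of_forall_eq_smul (hl : l ∈ S) (hl0 : l ≠ 0)
    (hsmul : ∀ l' ∈ S, l'.support ⊆ l.support → ∃ c : K, l' = c • l) : IsElementary S l := by
  refine ⟨⟨hl, hl0⟩, fun l' hl' hsub ↦ ?_⟩
  obtain ⟨c, rfl⟩ := hsmul l' hl'.1 hsub
  have hc : c ≠ 0 := by rintro rfl; exact hl'.2 (zero_smul K l)
  exact (Function.support_const_smul_of_ne_zero c l hc).ge

theorem IsElementary.finrank_le_card_add_one [Finite ι] (hl : IsElementary S l) (F : Finset ι)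
    (hF : ∀ l' ∈ S, (∀ i ∈ F, l' i = 0) → ∀ i, l i = 0 → l' i = 0) :
    Module.finrank K S ≤ F.card + 1 := by
  classical
  by_contra! hlt
  obtain ⟨i₀, hi₀⟩ := Function.ne_iff.1 hl.1.2
  let restrict : S →ₗ[K] (↥(insert i₀ F) → K) :=
    LinearMap.funLeft K K Subtype.val ∘ₗ S.subtype
  have hker : restrict.ker ≠ ⊥ := by
    apply LinearMap.ker_ne_bot_of_finrank_lt
    rw [Module.finrank_fintype_fun_eq_card, Fintype.card_coe]
    exact (Finset.card_insert_le i₀ F).trans_lt hlt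
  obtain ⟨l', hl'ker, hl'0⟩ := Submodule.exists_mem_ne_zero_of_ne_bot hker
  have hvanish : ∀ i ∈ insert i₀ F, l'.1 i = 0 := fun i hi ↦ congrFun hl'ker ⟨i, hi⟩
  have hsub : l'.1.support ⊆ l.support := fun i hi hli ↦
    hi (hF l' l'.2 (fun j hj ↦ hvanish j (Finset.mem_insert_of_mem hj)) i hli)
  exact hl.2 ⟨l'.2, by simpa using hl'0⟩ hsub hi₀ (hvanish i₀ (Finset.mem_insert_self i₀ F))

variable {κ : Type*} [Fintype ι] [DecidableEq κ]

/-- In a fibre of `β` that misses the support of `l`, one of the equations `l i = 0` follows from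
the others. -/
theorem IsElementary.finrank_add_card_sdiff_le [DecidableEq K] (β : ι → κ)
    (hβ : ∀ l ∈ S, ∀ k, ∑ i with β i = k, l i = 0) (hl : IsElementary S l) :
    Module.finrank K S +
        (Finset.univ.image β \ (Finset.univ.filter fun i ↦ l i ≠ 0).image β).card ≤
      (Finset.univ.filter fun i ↦ l i = 0).card + 1 := by
  classical
  set s : Finset ι := Finset.univ.filter fun i ↦ l i ≠ 0 with hs
  set zeros : Finset ι := Finset.univ.filter fun i ↦ l i = 0 with hzeros
  set missed : Finset κ := Finset.univ.image β \ s.image β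
  have hnotMem : ∀ i, β i ∈ missed → l i = 0 := fun i hi ↦ by
    by_contra hli
    exact (Finset.mem_sdiff.1 hi).2 (Finset.mem_image_of_mem β (by simpa [hs] using hli))
  have hsurj : Set.SurjOn β zeros missed := fun k hk ↦ by
    obtain ⟨i, -, rfl⟩ := Finset.mem_image.1 (Finset.mem_sdiff.1 hk).1
    exact ⟨i, by simpa [hzeros] using hnotMem i hk, rfl⟩
  obtain ⟨R, hRzeros, hRinj, hR⟩ := Finset.exists_subset_injOn_image_eq_of_surjOn _ _ hsurj
  have hrank : Module.finrank K S ≤ (zeros \ R).card + 1 := by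
    refine hl.finrank_le_card_add_one _ fun l' hl' hl'F i hli ↦ ?_
    by_cases hiR : i ∈ R
    · rw [← hβ l' hl' (β i), eq_comm]
      refine Finset.sum_eq_single_of_mem i (by simp) fun j hj hji ↦ hl'F j ?_
      have hβj : β j = β i := (Finset.mem_filter.1 hj).2
      have hlj : l j = 0 := hnotMem j (hβj ▸ hR ▸ Finset.mem_image_of_mem β hiR)
      exact Finset.mem_sdiff.2 ⟨by simpa [hzeros] using hlj, fun hjR ↦ hji (hRinj hjR hiR hβj)⟩
    · exact hl'F i (by simp [hzeros, hiR, hli])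
  have hR_card : missed.card = R.card := hR ▸ Finset.card_image_of_injOn hRinj
  have hsdiff_card := Finset.card_sdiff_add_card_eq_card (Finset.coe_subset.1 hRzeros)
  omega

theorem IsElementary.ncard_support_add_le (β : ι → κ)
    (hβ : ∀ l ∈ S, ∀ k, ∑ i with β i = k, l i = 0) (hl : IsElementary S l) :
    l.support.ncard + 2 * (Module.finrank K S + (Finset.univ.image β).card) ≤
      2 * (Fintype.card ι + 1) := by
  classical
  have hrank := hl.finrank_add_card_sdiff_le β hβ
  set s : Finset ι := Finset.univ.filter fun i ↦ l i ≠ 0 with hs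
  have hfibre : 2 * (s.image β).card ≤ s.card := by
    refine Finset.mul_card_image_le_card s 2 fun k hk ↦ ?_
    obtain ⟨i, hi, hik⟩ := Finset.mem_image.1 hk
    rw [hs, Finset.filter_comm]
    exact two_le_card_filter_ne_zero_of_sum_eq_zero (hβ l hl.1.1 k) (by simpa using hik)
      (Finset.mem_filter.1 hi).2
  have hsupp : l.support.ncard = s.card := ncard_support_eq_card_filter l
  have hblocks : (Finset.univ.image β \ s.image β).card + (s.image β).card =
      (Finset.univ.image β).card :=
    Finset.card_sdiff_add_card_eq_card (Finset.image_subset_image s.subset_univ)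
  have hcard : (Finset.univ.filter fun i ↦ l i = 0).card + s.card = Fintype.card ι :=
    Finset.card_filter_add_card_filter_not _
  omega

end ElementaryVectors

section AffineRelations

variable {ι V : Type*} [Fintype ι] [AddCommGroup V] [Module ℝ V]

/-- The space of affine relations of a point configuration `v`: coefficient vectors `l` with
`∑ l i = 0` and `∑ l i • v i = 0`. -/
def affineRelations (v : ι → V) : Submodule ℝ (ι → ℝ) where
  carrier := {l | ∑ i, l i = 0 ∧ ∑ i, l i • v i = 0}
  zero_mem' := by simp
  add_mem' := by
    rintro a b ⟨ha, ha'⟩ ⟨hb, hb'⟩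
    simp [add_smul, Finset.sum_add_distrib, *]
  smul_mem' := by
    rintro c a ⟨ha, ha'⟩
    simp [mul_smul, ← Finset.mul_sum, ← Finset.smul_sum, *]

theorem mem_affineRelations {v : ι → V} {l : ι → ℝ} :
    l ∈ affineRelations v ↔ ∑ i, l i = 0 ∧ ∑ i, l i • v i = 0 :=
  Iff.rfl

theorem affineIndependent_iff_affineRelations_eq_bot {v : ι → V} :
    AffineIndependent ℝ v ↔ affineRelations v = ⊥ := by
  simp_rw [affineIndependent_iff_of_fintype, Submodule.eq_bot_iff, mem_affineRelations, and_imp,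
    funext_iff, Pi.zero_apply]
  exact forall₂_congr fun l hl ↦ by rw [Finset.weightedVSub_eq_linear_combination _ hl]

theorem comp_mem_affineRelations_comp_iff {κ : Type*} [Fintype κ] {e : κ → ι}
    (he : Function.Injective e) {v : ι → V} {l : ι → ℝ} (hl : l.support ⊆ Set.range e) :
    l ∘ e ∈ affineRelations (v ∘ e) ↔ l ∈ affineRelations v := by
  have hzero : ∀ i ∉ Set.range e, l i = 0 := fun i hi ↦ Function.notMem_support.1 fun h ↦ hi (hl h)
  simp only [mem_affineRelations, Function.comp_apply]
  rw [Fintype.sum_of_injective e he (fun k ↦ l (e k)) l hzero fun _ ↦ rfl,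
    Fintype.sum_of_injective e he (fun k ↦ l (e k) • v (e k)) (fun i ↦ l i • v i)
      (fun i hi ↦ by rw [hzero i hi, zero_smul]) fun _ ↦ rfl]

variable {v : ι → V}

theorem affineIndependent_image_iff (hv : Function.Injective v) (X : Set ι) :
    AffineIndependent ℝ (Subtype.val : v '' X → V) ↔
      ∀ l ∈ affineRelations v, l.support ⊆ X → l = 0 := by
  classical
  have hX : Set.range (Subtype.val : X → ι) = X := Subtype.range_val
  rw [← affineIndependent_equiv (Equiv.Set.image v X hv),
    show Subtype.val ∘ Equiv.Set.image v X hv = v ∘ Subtype.val from rfl,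
    affineIndependent_iff_affineRelations_eq_bot, Submodule.eq_bot_iff]
  constructor
  · intro h l hl hlX
    have hres : l ∘ (Subtype.val : X → ι) = 0 :=
      h _ ((comp_mem_affineRelations_comp_iff Subtype.val_injective (by rwa [hX])).2 hl)
    ext i
    by_contra hi
    exact hi (congrFun hres ⟨i, hlX hi⟩)
  · intro h l hl
    have hext : Function.extend Subtype.val l 0 ∘ (Subtype.val : X → ι) = l :=
      Function.extend_comp Subtype.val_injective l 0
    have hsupp : (Function.extend (Subtype.val : X → ι) l 0).support ⊆ X := fun i hi ↦ by
      by_contra hiX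
      exact hi (Function.extend_apply' _ _ _ (by simpa using hiX))
    rw [← hext, h _ ((comp_mem_affineRelations_comp_iff Subtype.val_injective (by rwa [hX])).1
      (by rwa [hext])) hsupp]
    rfl

end AffineRelations

section Circuits

variable {ι α : Type*} [Fintype ι] {v : ι → α → ℝ}

theorem isAffCircuit_image_iff (hv : Function.Injective v) (X : Set ι) :
    IsAffCircuit (v '' X) ↔ ∃ l, IsElementary (affineRelations v) l ∧ l.support = X := by
  have hssubset : ∀ {A B : Set ι}, v '' A ⊂ v '' B ↔ A ⊂ B :=
    hv.injOn.image_ssubset_image_iff (Set.subset_univ _) (Set.subset_univ _)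
  simp only [IsAffCircuit, affineIndependent_image_iff hv, not_forall]
  constructor
  · rintro ⟨⟨l, hl, hlX, hl0⟩, hproper⟩
    have hmin : ∀ l' ∈ affineRelations v, l' ≠ 0 → l'.support ⊆ X → l'.support = X := by
      intro l' hl' hl'0 hsub
      by_contra hne
      exact hl'0 ((affineIndependent_image_iff hv _).1
        (hproper _ (hssubset.2 (hsub.ssubset_of_ne hne))) l' hl' le_rfl)
    have hlX := hmin l hl hl0 hlX
    exact ⟨l, ⟨⟨hl, hl0⟩, fun l' hl' hsub ↦
      (hlX.trans (hmin l' hl'.1 hl'.2 (hsub.trans hlX.le)).symm).le⟩, hlX⟩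
  · rintro ⟨l, hl, rfl⟩
    refine ⟨⟨l, hl.1.1, le_rfl, hl.1.2⟩, fun Y hY ↦ ?_⟩
    obtain ⟨X, rfl⟩ := Set.subset_range_iff_exists_image_eq.1
      (hY.subset.trans (Set.image_subset_range v _))
    rw [hssubset] at hY
    refine (affineIndependent_image_iff hv X).2 fun l' hl' hsub ↦ ?_
    by_contra hl'0
    exact hY.not_subset ((hl.2 ⟨hl', hl'0⟩ (hsub.trans hY.subset)).trans hsub)

theorem IsAffCircuit.exists_isElementary (hv : Function.Injective v) {Z : Set (α → ℝ)}
    (hZ : Z ⊆ Set.range v) (hcirc : IsAffCircuit Z) :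
    ∃ l, IsElementary (affineRelations v) l ∧ l.support.ncard = Z.ncard := by
  obtain ⟨X, rfl⟩ := Set.subset_range_iff_exists_image_eq.1 hZ
  obtain ⟨l, hl, rfl⟩ := (isAffCircuit_image_iff hv X).1 hcirc
  exact ⟨l, hl, (Set.ncard_image_of_injective _ hv).symm⟩

theorem IsElementary.exists_isAffCircuit (hv : Function.Injective v) {l : ι → ℝ}
    (hl : IsElementary (affineRelations v) l) :
    ∃ Z ⊆ Set.range v, IsAffCircuit Z ∧ Z.ncard = l.support.ncard :=
  ⟨v '' l.support, Set.image_subset_range v _, (isAffCircuit_image_iff hv _).2 ⟨l, hl, rfl⟩,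
    Set.ncard_image_of_injective _ hv⟩

theorem four_le_ncard_support_of_mem_affineRelations (hv : Function.Injective v)
    (hv01 : ∀ i a, v i a = 0 ∨ v i a = 1) {l : ι → ℝ} (hl : l ∈ affineRelations v) (hl0 : l ≠ 0) :
    4 ≤ l.support.ncard := by
  classical
  obtain ⟨hsum, hval⟩ := hl
  obtain ⟨i, hi⟩ := Function.ne_iff.1 hl0
  obtain ⟨j, hij, hj⟩ : ∃ j, j ≠ i ∧ l j ≠ 0 := by
    by_contra! h
    exact hi (by rwa [Fintype.sum_eq_single i h] at hsum)
  obtain ⟨a, ha⟩ := Function.ne_iff.1 (hv.ne hij)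
  obtain ⟨p, q, hp, hq, hpa, hqa⟩ :
      ∃ p q, l p ≠ 0 ∧ l q ≠ 0 ∧ v p a = 1 ∧ ¬ v q a = 1 := by
    rcases hv01 i a with hia | hia
    · exact ⟨j, i, hj, hi, (hv01 j a).resolve_left (hia ▸ ha), by simp [hia]⟩
    · exact ⟨i, j, hi, hj, hia, hia ▸ ha⟩
  have hone : ∑ k with v k a = 1, l k = 0 := by
    refine Eq.trans ?_ (congrFun hval a)
    rw [Finset.sum_filter, Finset.sum_apply]
    refine Finset.sum_congr rfl fun k _ ↦ ?_
    rcases hv01 k a with hk | hk <;> simp [hk]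
  have hzero : ∑ k with ¬ v k a = 1, l k = 0 := by
    linarith [Finset.sum_filter_add_sum_filter_not Finset.univ (fun k ↦ v k a = 1) l]
  have hcard_one := two_le_card_filter_ne_zero_of_sum_eq_zero hone (by simpa using hpa) hp
  have hcard_zero := two_le_card_filter_ne_zero_of_sum_eq_zero hzero (by simpa using hqa) hq
  have hsplit := Finset.card_filter_add_card_filter_not
    (s := Finset.univ.filter (l · ≠ 0)) (fun k ↦ v k a = 1)
  rw [Finset.filter_comm] at hcard_one hcard_zero
  rw [ncard_support_eq_card_filter]
  omega

end Circuits

section MeetIrreducibles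

variable {α ι : Type*} [PartialOrder α]

theorem meetIrred_of_forall_lt_imp_le {x u : α} (hxu : x < u) (hu : ∀ y, x < y → u ≤ y) :
    MeetIrred x := by
  refine ⟨fun htop ↦ hxu.not_ge (htop u), fun y z hx ↦ ?_⟩
  by_contra! hne
  have hy : x < y := (hx.1 (by simp)).lt_of_ne hne.1
  have hz : x < z := (hx.1 (by simp)).lt_of_ne hne.2
  exact hxu.not_ge (hx.2 (by simp [lowerBounds, hu y hy, hu z hz]))

theorem le_of_forall_meetIrred [Finite α] {x y : α}
    (h : ∀ q, MeetIrred q → y ≤ q → x ≤ q) : x ≤ y := by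
  induction y using WellFoundedGT.induction with
  | _ y ih =>
    by_contra hxy
    have hirred : ¬ MeetIrred y := fun hy ↦ hxy (h y hy le_rfl)
    have hntop : ¬ IsTop y := fun htop ↦ hxy (htop x)
    obtain ⟨a, b, hab, hya, hyb⟩ : ∃ a b, IsGLB {a, b} y ∧ y ≠ a ∧ y ≠ b := by
      simpa [MeetIrred, hntop] using hirred
    have hxub : ∀ c, c ∈ ({a, b} : Set α) → y ≠ c → x ≤ c := fun c hc hne ↦
      ih c ((hab.1 hc).lt_of_ne hne) fun q hq hcq ↦ h q hq ((hab.1 hc).trans hcq)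
    exact hxy (hab.2 (by simp [lowerBounds, hxub a (by simp) hya, hxub b (by simp) hyb]))

/-- The vertex of the order polytope of the poset of meet-irreducibles given by the filter of all
meet-irreducibles above `x`. -/
noncomputable def irredVertex (x : α) : {q : α // MeetIrred q} → ℝ :=
  Set.indicator {q | x ≤ q.1} fun _ ↦ 1

theorem irredVertex_eq_zero_or_one (x : α) (q : {q : α // MeetIrred q}) :
    irredVertex x q = 0 ∨ irredVertex x q = 1 :=
  Set.indicator_eq_zero_or_self _ _ _

theorem irredVertex_injective [Finite α] :
    Function.Injective (irredVertex : α → {q : α // MeetIrred q} → ℝ) := by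
  intro x y hxy
  have hiff : ∀ q, MeetIrred q → (x ≤ q ↔ y ≤ q) := fun q hq ↦
    (Set.ext_iff.1 (Set.indicator_one_inj ℝ hxy)) ⟨q, hq⟩
  exact le_antisymm (le_of_forall_meetIrred fun q hq ↦ (hiff q hq).2)
    (le_of_forall_meetIrred fun q hq ↦ (hiff q hq).1)

/-- Birkhoff's theorem: `hmeet` says that `α` has binary meets and that its meet-irreducibles are
meet-prime. -/
theorem range_irredVertex [Finite α] [OrderTop α]
    (hmeet : ∀ y z : α, ∃ x, ∀ q, MeetIrred q → (x ≤ q ↔ y ≤ q ∨ z ≤ q)) :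
    Set.range irredVertex = OPVertexSet {q : α // MeetIrred q} := by
  apply Set.Subset.antisymm
  · rintro _ ⟨x, rfl⟩
    exact ⟨{q | x ≤ q.1}, fun a ha b hab ↦ le_trans (α := α) ha hab, rfl⟩
  · rintro _ ⟨A, hA, rfl⟩
    have hgen : ∀ B : Set {q : α // MeetIrred q}, ∃ x : α, ∀ q : {q : α // MeetIrred q},
        x ≤ q ↔ ∃ b ∈ B, b ≤ q := by
      intro B
      induction B, B.toFinite using Set.Finite.induction_on with
      | empty => exact ⟨⊤, fun q ↦ by simpa [← isTop_iff_eq_top] using q.2.1⟩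
      | @insert b B _ _ ih =>
        obtain ⟨z, hz⟩ := ih
        obtain ⟨x, hx⟩ := hmeet b z
        exact ⟨x, fun q ↦ by rw [hx q q.2, hz q]; simp⟩
    obtain ⟨x, hx⟩ := hgen A
    refine ⟨x, congrArg (Set.indicator · _) (Set.ext fun q ↦ (hx q).trans ?_)⟩
    exact ⟨fun ⟨b, hb, hbq⟩ ↦ hA b hb q hbq, fun hq ↦ ⟨q, hq, le_rfl⟩⟩

variable [Fintype ι]

open Classical in
/-- The total weight that `l`, placed at the points `e i`, gives to the principal ideal of `u`. -/
noncomputable def downSum (e : ι → α) (l : ι → ℝ) (u : α) : ℝ :=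
  ∑ i with e i ≤ u, l i

theorem downSum_injective [Finite α] {e : ι → α} (he : Function.Injective e) :
    Function.Injective (downSum e) := by
  classical
  intro l l' h
  have hdiff : ∀ u, ∑ i with e i ≤ u, (l i - l' i) = 0 := fun u ↦ by
    rw [Finset.sum_sub_distrib]
    exact sub_eq_zero.2 (congrFun h u)
  have hzero : ∀ u i, e i = u → l i - l' i = 0 := by
    intro u
    induction u using WellFoundedLT.induction with
    | _ u ih =>
      rintro i rfl
      rw [← hdiff (e i), eq_comm]
      refine Finset.sum_eq_single_of_mem i (by simp) fun j hj hji ↦ ?_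
      exact ih (e j) ((Finset.mem_filter.1 hj).2.lt_of_ne (he.ne hji)) j rfl
  exact funext fun i ↦ sub_eq_zero.1 (hzero _ i rfl)

theorem mem_affineRelations_irredVertex_iff [OrderTop α] {e : ι → α} {l : ι → ℝ} :
    l ∈ affineRelations (fun i ↦ irredVertex (e i)) ↔
      downSum e l ⊤ = 0 ∧ ∀ q, MeetIrred q → downSum e l q = 0 := by
  have hcoord : ∀ q : {q : α // MeetIrred q},
      (∑ i, l i • irredVertex (e i)) q = downSum e l q := fun q ↦ by
    classical simp [downSum, irredVertex, Finset.sum_filter, Set.indicator]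
  rw [mem_affineRelations, funext_iff, Subtype.forall]
  simp [hcoord, downSum]

end MeetIrreducibles

section TurnRelations

/-- The upper element of the `m`-th square of a strip of squares with turns at `T`; the other
elements are `2m+1`, `2m+2` and, at the bottom, `2m+3`. -/
def turnSide (T : Finset ℕ) (m : ℕ) : ℕ :=
  if m ∈ T then 2 * m - 1 else 2 * m

/-- The signed indicator of the `m`-th square, `+1` at its top and bottom and `-1` at its sides. -/
def turnSquare (T : Finset ℕ) (m : ℕ) : ℕ → ℝ :=
  Pi.single (2 * m + 3) 1 + Pi.single (turnSide T m) 1 - Pi.single (2 * m + 1) 1 -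
    Pi.single (2 * m + 2) 1

/-- The combination `∑ c m • turnSquare T m` of the squares `0, …, n`. -/
def turnSum (n : ℕ) (T : Finset ℕ) (c : ℕ → ℝ) (y : ℕ) : ℝ :=
  ∑ m ∈ Finset.range (n + 1), c m * turnSquare T m y

/-- The span of the squares `0, …, n`, as functions on the labels `0, …, 2n+5` (of which the last
two belong to no square). -/
def turnRelations (n : ℕ) (T : Finset ℕ) : Submodule ℝ (Fin (2 * n + 6) → ℝ) :=
  Submodule.span ℝ ((fun m y ↦ turnSquare T m y.1) '' Finset.range (n + 1))

variable {n m j : ℕ} {T : Finset ℕ} {c : ℕ → ℝ}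

theorem mem_turnRelations {l : Fin (2 * n + 6) → ℝ} :
    l ∈ turnRelations n T ↔ ∃ c, l = fun y ↦ turnSum n T c y.1 := by
  rw [turnRelations, Submodule.mem_span_image_finset_iff_exists_fun']
  refine exists_congr fun c ↦ ?_
  simp [turnSum, funext_iff, Finset.sum_apply, eq_comm]

theorem sum_turnSquare_mul (hm : m ≤ n) (f : ℕ → ℝ) :
    ∑ y : Fin (2 * n + 6), turnSquare T m y * f y =
      f (2 * m + 3) + f (turnSide T m) - f (2 * m + 1) - f (2 * m + 2) := by
  have hside : turnSide T m ≤ 2 * m := by unfold turnSide; split <;> omega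
  have hsingle : ∀ a < 2 * n + 6,
      ∑ y ∈ Finset.range (2 * n + 6), (Pi.single a 1 : ℕ → ℝ) y * f y = f a := fun a ha ↦ by
    simp [Pi.single_apply, ha]
  rw [Fin.sum_univ_eq_sum_range (fun y ↦ turnSquare T m y * f y)]
  simp only [turnSquare, Pi.add_apply, Pi.sub_apply, add_mul, sub_mul, Finset.sum_add_distrib,
    Finset.sum_sub_distrib]
  rw [hsingle _ (by omega), hsingle _ (by omega), hsingle _ (by omega), hsingle _ (by omega)]

theorem sum_turnSum_mul (f : ℕ → ℝ) :
    ∑ y : Fin (2 * n + 6), turnSum n T c y * f y =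
      ∑ m ∈ Finset.range (n + 1),
        c m * (f (2 * m + 3) + f (turnSide T m) - f (2 * m + 1) - f (2 * m + 2)) := by
  simp only [turnSum, Finset.sum_mul, mul_assoc]
  rw [Finset.sum_comm]
  refine Finset.sum_congr rfl fun m hm ↦ ?_
  rw [← Finset.mul_sum, sum_turnSquare_mul (by simpa [Nat.lt_succ_iff] using hm)]

theorem turnSum_apply_zero : turnSum n T c 0 = c 0 := by
  have hsquare : ∀ m, c m * turnSquare T m 0 = if m = 0 then c m else 0 := fun m ↦ by
    simp only [turnSquare, turnSide, Pi.add_apply, Pi.sub_apply, Pi.single_apply]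
    grind
  simp [turnSum, hsquare]

theorem turnSum_apply_one (hT : T ⊆ Finset.Icc 2 n) : turnSum n T c 1 = -c 0 := by
  have hsquare : ∀ m, c m * turnSquare T m 1 = -if m = 0 then c m else 0 := fun m ↦ by
    have hmT : m ∈ T → 2 ≤ m := fun h ↦ (Finset.mem_Icc.1 (hT h)).1
    simp only [turnSquare, turnSide, Pi.add_apply, Pi.sub_apply, Pi.single_apply]
    grind
  simp [turnSum, hsquare]

theorem turnSum_apply_even (hj : j ≤ n) :
    turnSum n T c (2 * j + 2) = (if j + 1 ≤ n ∧ j + 1 ∉ T then c (j + 1) else 0) - c j := by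
  have hsquare : ∀ m, c m * turnSquare T m (2 * j + 2) =
      (if m = j + 1 then if j + 1 ∉ T then c m else 0 else 0) - if m = j then c m else 0 :=
    fun m ↦ by
      simp only [turnSquare, turnSide, Pi.add_apply, Pi.sub_apply, Pi.single_apply]
      grind
  simp only [turnSum, hsquare, Finset.sum_sub_distrib, Finset.sum_ite_eq', Finset.mem_range]
  grind

theorem turnSum_apply_odd (hT : T ⊆ Finset.Icc 2 n) (hj : j ≤ n) :
    turnSum n T c (2 * j + 3) =
      c j - (if j + 1 ≤ n then c (j + 1) else 0) + if j + 2 ∈ T then c (j + 2) else 0 := by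
  have hsquare : ∀ m, c m * turnSquare T m (2 * j + 3) =
      (if m = j then c m else 0) - (if m = j + 1 then c m else 0) +
        if m = j + 2 then if j + 2 ∈ T then c m else 0 else 0 :=
    fun m ↦ by
      simp only [turnSquare, turnSide, Pi.add_apply, Pi.sub_apply, Pi.single_apply]
      grind
  have hjT : j + 2 ∈ T → j + 2 ≤ n := fun h ↦ (Finset.mem_Icc.1 (hT h)).2
  simp only [turnSum, hsquare, Finset.sum_sub_distrib, Finset.sum_add_distrib, Finset.sum_ite_eq',
    Finset.mem_range]
  grind

theorem coeff_eq_of_turnSum_eq_zero (hT : T ⊆ Finset.Icc 2 n) (hT' : ∀ k ∈ T, k + 1 ∉ T)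
    (heven : ∀ j < n, j + 1 ∉ T → turnSum n T c (2 * j + 2) = 0)
    (hodd : ∀ j < n, j + 1 ∈ T → turnSum n T c (2 * j + 3) = 0) :
    ∀ k ≤ n, c k = c 0 := by
  intro k hk
  induction k with
  | zero => rfl
  | succ j ih =>
    rw [← ih (by omega)]
    by_cases hjT : j + 1 ∈ T
    · have := hodd j hk hjT
      rw [turnSum_apply_odd hT (by omega), if_pos hk, if_neg (hT' _ hjT)] at this
      linarith
    · have := heven j hk hjT
      rw [turnSum_apply_even (by omega), if_pos ⟨hk, hjT⟩] at this
      linarith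

theorem finrank_turnRelations (hT : T ⊆ Finset.Icc 2 n) (hT' : ∀ k ∈ T, k + 1 ∉ T) :
    Module.finrank ℝ (turnRelations n T) = n + 1 := by
  have hindep : LinearIndepOn ℝ (fun m (y : Fin (2 * n + 6)) ↦ turnSquare T m y.1)
      (Finset.range (n + 1)) := by
    refine linearIndepOn_finset_iff.2 fun c hc k hk ↦ ?_
    have hzero : ∀ y < 2 * n + 6, turnSum n T c y = 0 := fun y hy ↦ by
      simpa [turnSum] using congrFun hc ⟨y, hy⟩
    have hconst := coeff_eq_of_turnSum_eq_zero hT hT' (c := c)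
      (fun j hj _ ↦ hzero _ (by omega)) (fun j hj _ ↦ hzero _ (by omega)) k
      (by simpa [Nat.lt_succ_iff] using hk)
    rw [hconst, ← turnSum_apply_zero (n := n) (T := T) (c := c), hzero 0 (by omega)]
  rw [turnRelations, Set.image_eq_range]
  exact (finrank_span_eq_card hindep).trans (by simp)

/-- The class of a label under the relation generated by `2m+2 ∼ 2m+3` and
`turnSide T m ∼ 2m+1`, which matches the `+1`s with the `-1`s of each square. -/
def turnBlock (n : ℕ) (T : Finset ℕ) (y : ℕ) : ℕ :=
  if y = 2 * n + 5 then n + 3 else if y / 2 ∈ T then y / 2 - 1 else y / 2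

theorem turnBlock_bottom (hm : m ≤ n) : turnBlock n T (2 * m + 3) = turnBlock n T (2 * m + 2) := by
  grind [turnBlock]

theorem turnBlock_turnSide (hT : T ⊆ Finset.Icc 2 n) (hT' : ∀ k ∈ T, k + 1 ∉ T) (hm : m ≤ n) :
    turnBlock n T (turnSide T m) = turnBlock n T (2 * m + 1) := by
  by_cases hmT : m ∈ T
  · have hm2 : 2 ≤ m := (Finset.mem_Icc.1 (hT hmT)).1
    have hpred : m - 1 ∉ T := fun h ↦ hT' _ h (by rwa [Nat.sub_add_cancel (by omega)])
    have hdiv : (2 * m - 1) / 2 = m - 1 := by omega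
    have hdiv' : (2 * m + 1) / 2 = m := by omega
    simp only [turnBlock, turnSide, hmT, if_true, hdiv, hdiv', hpred, if_false]
    rw [if_neg (by omega), if_neg (by omega)]
  · grind [turnBlock, turnSide]

theorem sum_turnBlock_eq_zero (hT : T ⊆ Finset.Icc 2 n) (hT' : ∀ k ∈ T, k + 1 ∉ T)
    {l : Fin (2 * n + 6) → ℝ} (hl : l ∈ turnRelations n T) (k : ℕ) :
    ∑ y with turnBlock n T y.1 = k, l y = 0 := by
  obtain ⟨c, rfl⟩ := mem_turnRelations.1 hl
  calc ∑ y : Fin (2 * n + 6) with turnBlock n T y.1 = k, turnSum n T c y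
    _ = ∑ y : Fin (2 * n + 6), turnSum n T c y * if turnBlock n T y.1 = k then 1 else 0 := by
        simp [Finset.sum_filter]
    _ = 0 := by
        rw [sum_turnSum_mul fun y ↦ if turnBlock n T y = k then 1 else 0]
        refine Finset.sum_eq_zero fun m hm ↦ ?_
        have hm : m ≤ n := by simpa [Nat.lt_succ_iff] using hm
        rw [turnBlock_bottom hm, turnBlock_turnSide hT hT' hm]
        ring

theorem le_card_image_turnBlock :
    n + 4 ≤ (Finset.univ.image fun y : Fin (2 * n + 6) ↦ turnBlock n T y.1).card + T.card := by
  have hsub : Finset.range (n + 4) \ T ⊆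
      Finset.univ.image fun y : Fin (2 * n + 6) ↦ turnBlock n T y.1 := by
    intro k hk
    obtain ⟨hk, hkT⟩ := Finset.mem_sdiff.1 hk
    rw [Finset.mem_range] at hk
    rw [Finset.mem_image]
    rcases (by omega : k = n + 3 ∨ k ≤ n + 2) with rfl | hk
    · exact ⟨⟨2 * n + 5, by omega⟩, Finset.mem_univ _, by simp [turnBlock]⟩
    · exact ⟨⟨2 * k, by omega⟩, Finset.mem_univ _, by grind [turnBlock]⟩
  have := Finset.le_card_sdiff T (Finset.range (n + 4))
  have := Finset.card_le_card hsub
  rw [Finset.card_range] at *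
  omega

theorem IsElementary.ncard_support_le_of_turnRelations (hT : T ⊆ Finset.Icc 2 n)
    (hT' : ∀ k ∈ T, k + 1 ∉ T) {l : Fin (2 * n + 6) → ℝ}
    (hl : IsElementary (turnRelations n T) l) : l.support.ncard ≤ 4 + 2 * T.card := by
  have hbound := hl.ncard_support_add_le _ fun l hl ↦ sum_turnBlock_eq_zero hT hT' hl
  have hblocks := le_card_image_turnBlock (n := n) (T := T)
  rw [finrank_turnRelations hT hT', Fintype.card_fin] at hbound
  omega

theorem isElementary_turnSum_one (hT : T ⊆ Finset.Icc 2 n) (hT' : ∀ k ∈ T, k + 1 ∉ T) :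
    IsElementary (turnRelations n T) fun y ↦ turnSum n T 1 y.1 := by
  refine isElementary_of_forall_eq_smul (mem_turnRelations.2 ⟨1, rfl⟩) ?_ ?_
  · intro h
    simpa [turnSum_apply_zero] using congrFun h 0
  · intro l' hl' hsub
    obtain ⟨c, rfl⟩ := mem_turnRelations.1 hl'
    have hzero : ∀ y < 2 * n + 6, turnSum n T 1 y = 0 → turnSum n T c y = 0 := fun y hy hy0 ↦ by
      by_contra hne
      exact hsub (a := ⟨y, hy⟩) hne hy0
    have hconst := coeff_eq_of_turnSum_eq_zero hT hT' (c := c)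
      (fun j hj hjT ↦ hzero _ (by omega) (by
        rw [turnSum_apply_even hj.le, if_pos ⟨hj, hjT⟩]; simp))
      (fun j hj hjT ↦ hzero _ (by omega) (by
        rw [turnSum_apply_odd hT hj.le, if_pos (Nat.succ_le_of_lt hj), if_neg (hT' _ hjT)]; simp))
    refine ⟨c 0, funext fun y ↦ ?_⟩
    simp only [turnSum, Pi.smul_apply, smul_eq_mul, Finset.mul_sum, Pi.one_apply, one_mul]
    refine Finset.sum_congr rfl fun m hm ↦ ?_
    rw [hconst m (by simpa [Nat.lt_succ_iff] using hm)]

theorem turnSum_one_two_mul_ne_zero {k : ℕ} (hk : k ∈ insert 0 (insert (n + 1) T))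
    (hT : T ⊆ Finset.Icc 2 n) : turnSum n T 1 (2 * k) ≠ 0 := by
  have hkT : k ∈ T → k ≤ n := fun h ↦ (Finset.mem_Icc.1 (hT h)).2
  rw [Finset.mem_insert, Finset.mem_insert] at hk
  rcases k with _ | j
  · simp [turnSum_apply_zero]
  · rw [mul_add, mul_one, turnSum_apply_even (by grind), if_neg (by grind)]
    simp

theorem turnSum_one_two_mul_sub_one_ne_zero {k : ℕ} (hk : k ∈ insert 1 (insert (n + 2) T))
    (hT : T ⊆ Finset.Icc 2 n) : turnSum n T 1 (2 * k - 1) ≠ 0 := by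
  have hkT : k ∈ T → 2 ≤ k ∧ k ≤ n := fun h ↦ Finset.mem_Icc.1 (hT h)
  rw [Finset.mem_insert, Finset.mem_insert] at hk
  rcases (by grind : k = 1 ∨ 2 ≤ k) with rfl | hk2
  · simp [turnSum_apply_one hT]
  · obtain ⟨j, rfl⟩ := Nat.exists_eq_add_of_le' hk2
    rw [show 2 * (j + 2) - 1 = 2 * j + 3 by omega, turnSum_apply_odd hT (by grind)]
    simp only [Pi.one_apply]
    grind

theorem le_ncard_support_turnSum_one (hT : T ⊆ Finset.Icc 2 n) :
    4 + 2 * T.card ≤ (fun y : Fin (2 * n + 6) ↦ turnSum n T 1 y.1).support.ncard := by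
  have hmem : ∀ k ∈ T, 2 ≤ k ∧ k ≤ n := fun k hk ↦ Finset.mem_Icc.1 (hT hk)
  set evens := (insert 0 (insert (n + 1) T)).image (2 * ·) with hevens
  set odds := (insert 1 (insert (n + 2) T)).image (2 * · - 1) with hodds
  have hcard_evens : evens.card = T.card + 2 := by
    rw [hevens, Finset.card_image_of_injective _ (fun a b h ↦ by simpa using h),
      Finset.card_insert_of_notMem (by grind), Finset.card_insert_of_notMem (by grind)]
  have hcard_odds : odds.card = T.card + 2 := by
    rw [hodds, Finset.card_image_of_injOn (fun a _ b _ h ↦ by grind),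
      Finset.card_insert_of_notMem (by grind), Finset.card_insert_of_notMem (by grind)]
  have hdisj : Disjoint evens odds := by
    rw [Finset.disjoint_left]
    grind
  have hsub : ((evens ∪ odds : Finset ℕ) : Set ℕ) ⊆
      Fin.val '' (fun y : Fin (2 * n + 6) ↦ turnSum n T 1 y.1).support := by
    intro y hy
    rcases Finset.mem_union.1 hy with hy | hy <;> obtain ⟨k, hk, rfl⟩ := Finset.mem_image.1 hy
    · exact ⟨⟨2 * k, by grind⟩, turnSum_one_two_mul_ne_zero hk hT, rfl⟩
    · exact ⟨⟨2 * k - 1, by grind⟩, turnSum_one_two_mul_sub_one_ne_zero hk hT, rfl⟩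
  have hcard := Set.ncard_le_ncard hsub
  rw [Set.ncard_image_of_injective _ Fin.val_injective, Set.ncard_coe_finset,
    Finset.card_union_of_disjoint hdisj] at hcard
  omega

theorem ncard_support_turnSquare_le :
    (fun y : Fin (2 * n + 6) ↦ turnSquare T m y.1).support.ncard ≤ 4 := by
  have hsub : Fin.val '' (fun y : Fin (2 * n + 6) ↦ turnSquare T m y.1).support ⊆
      ({2 * m + 3, turnSide T m, 2 * m + 1, 2 * m + 2} : Finset ℕ) := by
    rintro _ ⟨y, hy, rfl⟩
    by_contra hne
    exact hy (by simp_all [turnSquare])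
  calc (fun y : Fin (2 * n + 6) ↦ turnSquare T m y.1).support.ncard
    _ = (Fin.val '' (fun y : Fin (2 * n + 6) ↦ turnSquare T m y.1).support).ncard :=
        (Set.ncard_image_of_injective _ Fin.val_injective).symm
    _ ≤ ({2 * m + 3, turnSide T m, 2 * m + 1, 2 * m + 2} : Finset ℕ).card :=
        (Set.ncard_le_ncard hsub).trans_eq (Set.ncard_coe_finset _)
    _ ≤ 4 := Finset.card_le_four

end TurnRelations

section SnakeOrder

variable {n m : ℕ} {w : ℕ → Letter}

theorem label_cases {c : ℕ} (hc : c < 2 * n + 6) :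
    c = 2 * n + 5 ∨ c = 2 * n + 4 ∨ c = 0 ∨ (∃ m ≤ n + 1, c = 2 * m + 1) ∨
      ∃ m ≤ n, c = 2 * m + 2 := by
  rcases c.even_or_odd' with ⟨k, rfl | rfl⟩
  · rcases k with _ | m
    · simp
    · rcases (by omega : m ≤ n ∨ m = n + 1) with hm | rfl
      exacts [.inr (.inr (.inr (.inr ⟨m, hm, rfl⟩))), .inr (.inl rfl)]
  · rcases (by omega : k ≤ n + 1 ∨ k = n + 2) with hk | rfl
    exacts [.inr (.inr (.inr (.inl ⟨k, hk, rfl⟩))), .inl rfl]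

theorem snakeSide_zero : snakeSide w 0 = 0 := by
  simp [snakeSide]

theorem snakeSide_eq_or (w : ℕ → Letter) (m : ℕ) :
    snakeSide w m = 2 * m ∨ 1 ≤ m ∧ snakeSide w m = 2 * m - 1 := by
  unfold snakeSide
  split <;> omega

theorem snakeCov_odd_odd (hm : m ≤ n) : SnakeCov n w (2 * m + 3) (2 * m + 1) := by
  rcases m.eq_zero_or_pos with rfl | hpos
  exacts [.cov31, .covOdd m hpos hm]

theorem snakeCov_odd_even (hm : m ≤ n) : SnakeCov n w (2 * m + 3) (2 * m + 2) := by
  rcases m.eq_zero_or_pos with rfl | hpos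
  exacts [.cov32, .covBot m hpos hm]

theorem snakeCov_even_snakeSide (hm : m ≤ n) : SnakeCov n w (2 * m + 2) (snakeSide w m) := by
  rcases m.eq_zero_or_pos with rfl | hpos
  exacts [by simpa [snakeSide_zero] using .cov20, .covSide m hpos hm]

theorem SnakeCov.eq_snakeSide {a b : ℕ} (h : SnakeCov n w a b) (ha : a = 2 * m + 2) :
    b = snakeSide w m := by
  cases h with
  | cov20 => obtain rfl : m = 0 := by omega
             exact snakeSide_zero.symm
  | covSide k => obtain rfl : k = m := by omega
                 rfl
  | _ => omega

theorem snakeLE_odd_iff (hm : m ≤ n + 1) {b : ℕ} : SnakeLE n w (2 * m + 1) b ↔ b ≤ 2 * m + 1 := by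
  refine ⟨snakeLE_le, fun hb ↦ ?_⟩
  induction m with
  | zero =>
    rcases (by omega : b = 0 ∨ b = 1) with rfl | rfl
    exacts [.single .cov10, .refl]
  | succ k ih =>
    rcases (by omega : b = 2 * k + 3 ∨ b = 2 * k + 2 ∨ b ≤ 2 * k + 1) with rfl | rfl | hb
    · exact .refl
    · exact .single (snakeCov_odd_even (by omega))
    · exact .head (snakeCov_odd_odd (by omega)) (ih (by omega) hb)

theorem snakeLE_even_iff (hm : m ≤ n) {b : ℕ} :
    SnakeLE n w (2 * m + 2) b ↔ b = 2 * m + 2 ∨ SnakeLE n w (snakeSide w m) b := by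
  constructor
  · intro h
    rcases h.cases_head with h | ⟨c, hc, h⟩
    exacts [.inl h.symm, .inr (hc.eq_snakeSide rfl ▸ h)]
  · rintro (rfl | h)
    exacts [.refl, .head (snakeCov_even_snakeSide hm) h]

theorem snakeHatLE_refl {a : ℕ} (ha : a < 2 * n + 6) : SnakeHatLE n w a a :=
  le_refl (α := SnakeHat n w) ⟨a, ha⟩

theorem SnakeHatLE.index_le {a b : ℕ} (h : SnakeHatLE n w a b) :
    a = 2 * n + 5 ∨ b = 2 * n + 4 ∨ b ≤ a :=
  h.imp_right (Or.imp_right fun h ↦ snakeLE_le h.2.2)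

theorem snakeHatLE_zero_iff {b : ℕ} : SnakeHatLE n w 0 b ↔ b = 2 * n + 4 ∨ b = 0 := by
  refine ⟨fun h ↦ by have := h.index_le; omega, ?_⟩
  rintro (rfl | rfl)
  exacts [.inr (.inl rfl), snakeHatLE_refl (by omega)]

theorem snakeHatLE_odd_iff (hm : m ≤ n + 1) {b : ℕ} :
    SnakeHatLE n w (2 * m + 1) b ↔ b = 2 * n + 4 ∨ b ≤ 2 * m + 1 := by
  rw [SnakeHatLE, snakeLE_odd_iff hm]
  omega

theorem snakeHatLE_even_iff (hm : m ≤ n) {b : ℕ} :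
    SnakeHatLE n w (2 * m + 2) b ↔ b = 2 * m + 2 ∨ SnakeHatLE n w (snakeSide w m) b := by
  have := snakeSide_eq_or w m
  rw [SnakeHatLE, SnakeHatLE, snakeLE_even_iff hm]
  grind

open Classical in
theorem snakeHatLE_square (hm : m ≤ n) (b : ℕ) :
    (if SnakeHatLE n w (2 * m + 3) b then (1 : ℝ) else 0) +
        (if SnakeHatLE n w (snakeSide w m) b then 1 else 0) -
        (if SnakeHatLE n w (2 * m + 1) b then 1 else 0) -
        (if SnakeHatLE n w (2 * m + 2) b then 1 else 0) =
      if b = 2 * m + 3 then 1 else 0 := by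
  have hside := snakeSide_eq_or w m
  have hbound : SnakeHatLE n w (snakeSide w m) b → b = 2 * n + 4 ∨ b ≤ 2 * m := fun h ↦ by
    have := h.index_le
    omega
  have htop : b = 2 * n + 4 → SnakeHatLE n w (snakeSide w m) b := fun h ↦ .inr (.inl h)
  rw [show 2 * m + 3 = 2 * (m + 1) + 1 by ring]
  simp only [snakeHatLE_odd_iff (show m + 1 ≤ n + 1 by omega),
    snakeHatLE_odd_iff (show m ≤ n + 1 by omega), snakeHatLE_even_iff hm]
  grind

theorem snakeHatLE_bottom_of_le_sides (hm : m ≤ n) {c : ℕ} (hc : c < 2 * n + 6)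
    (h₁ : SnakeHatLE n w c (2 * m + 1)) (h₂ : SnakeHatLE n w c (2 * m + 2)) :
    SnakeHatLE n w c (2 * m + 3) := by
  induction c using Nat.strong_induction_on with
  | _ c ih =>
    rcases label_cases hc with hc | rfl | rfl | ⟨k, hk, rfl⟩ | ⟨k, hk, rfl⟩
    · exact .inl hc
    · rcases h₁ with h | h | ⟨h, -⟩ <;> omega
    · rw [snakeHatLE_zero_iff] at h₁
      omega
    · rw [snakeHatLE_odd_iff hk] at h₂ ⊢
      omega
    · have hside := snakeSide_eq_or w k
      have h₁ := ((snakeHatLE_even_iff hk).1 h₁).resolve_left (by omega)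
      have h₂ := ((snakeHatLE_even_iff hk).1 h₂).resolve_left fun h ↦ by
        have := h₁.index_le
        omega
      exact (snakeHatLE_even_iff hk).2 (.inr (ih _ (by omega) (by omega) h₁ h₂))

theorem snakeHatLE_even_or_of_not_le (hm : m ≤ n) {b q : ℕ} (hb : b ≤ 2 * m + 1)
    (hmb : ¬ SnakeHatLE n w (2 * m + 2) b) (hq : q ≤ 2 * m + 2) (hq' : ∀ k ≤ n, q ≠ 2 * k + 3) :
    SnakeHatLE n w (2 * m + 2) q ∨ SnakeHatLE n w b q := by
  induction m with
  | zero =>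
    rw [snakeHatLE_even_iff hm, snakeSide_zero, snakeHatLE_zero_iff] at hmb
    obtain rfl : b = 2 * 0 + 1 := by omega
    rw [snakeHatLE_even_iff hm, snakeHatLE_odd_iff (by omega)]
    omega
  | succ k ih =>
    rcases (by omega : q = 2 * (k + 1) + 2 ∨ q ≤ 2 * k + 3) with rfl | hq
    · exact .inl (snakeHatLE_refl (by omega))
    have hqk : q ≠ 2 * k + 3 := hq' k (by omega)
    rcases (by omega : b = 2 * (k + 1) + 1 ∨ b ≤ 2 * k + 2) with rfl | hb
    · exact .inr ((snakeHatLE_odd_iff (by omega)).2 (by omega))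
    rw [snakeHatLE_even_iff hm, not_or] at hmb
    rw [snakeHatLE_even_iff hm]
    rcases snakeSide_eq_or w (k + 1) with hside | ⟨-, hside⟩
    · rw [hside, mul_add, mul_one] at hmb ⊢
      have hbk : b ≠ 2 * k + 2 := by
        rintro rfl
        exact hmb.2 (snakeHatLE_refl (by omega))
      exact (ih (by omega) (by omega) hmb.2 (by omega)).imp_left .inr
    · rw [hside, show 2 * (k + 1) - 1 = 2 * k + 1 by omega,
        snakeHatLE_odd_iff (by omega)] at hmb ⊢
      obtain rfl : b = 2 * k + 2 := by omega
      rcases (by omega : q = 2 * k + 2 ∨ q ≤ 2 * k + 1) with rfl | hq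
      exacts [.inr (snakeHatLE_refl (by omega)), .inl (.inr (.inr hq))]

end SnakeOrder

section SnakeLattice

variable {n : ℕ} {w : ℕ → Letter}

instance : Fintype (SnakeHat n w) :=
  inferInstanceAs (Fintype (Fin (2 * n + 6)))

instance : OrderTop (SnakeHat n w) where
  top := ⟨2 * n + 4, by omega⟩
  le_top _ := .inr (.inl rfl)

/-- The element of `P̂(w)` with label `a`; unlike the anonymous constructor it has type
`SnakeHat n w` and not `Fin (2 * n + 6)`, whose order is a different one. -/
def snakeHatMk (n : ℕ) (w : ℕ → Letter) (a : ℕ) (ha : a < 2 * n + 6) : SnakeHat n w :=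
  ⟨a, ha⟩

theorem snakeHat_ext {x y : SnakeHat n w} (h : x.1 = y.1) : x = y :=
  Fin.ext h

theorem snakeHat_le_iff {x y : SnakeHat n w} : x ≤ y ↔ SnakeHatLE n w x.1 y.1 :=
  Iff.rfl

theorem snakeHat_eq_top_iff {x : SnakeHat n w} : x = ⊤ ↔ x.1 = 2 * n + 4 :=
  Fin.ext_iff

theorem isGLB_square {m : ℕ} (hm : m ≤ n) :
    IsGLB {snakeHatMk n w (2 * m + 1) (by omega), snakeHatMk n w (2 * m + 2) (by omega)}
      (snakeHatMk n w (2 * m + 3) (by omega)) := by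
  have hle : ∀ y : SnakeHat n w, y.1 ≤ 2 * m + 3 → snakeHatMk n w (2 * m + 3) (by omega) ≤ y :=
    fun y hy ↦ (snakeHatLE_odd_iff (by omega : m + 1 ≤ n + 1)).2 (.inr hy)
  refine ⟨by rintro y (rfl | rfl) <;> exact hle _ (by simp [snakeHatMk]), fun c hc ↦ ?_⟩
  exact snakeHatLE_bottom_of_le_sides hm c.2 (hc (.inl rfl)) (hc (.inr rfl))

theorem meetIrred_of_forall_snakeHatLE {x : SnakeHat n w} {b : ℕ} (hb : b < 2 * n + 6)
    (hxb : SnakeHatLE n w x.1 b) (hne : x.1 ≠ b)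
    (hcov : ∀ c < 2 * n + 6, SnakeHatLE n w x.1 c → c ≠ x.1 → SnakeHatLE n w b c) :
    MeetIrred x := by
  refine meetIrred_of_forall_lt_imp_le (u := snakeHatMk n w b hb)
    (lt_of_le_of_ne hxb fun h ↦ hne (congrArg Fin.val h)) fun y hy ↦ ?_
  exact hcov y.1 y.2 hy.le fun h ↦ hy.ne' (snakeHat_ext h)

theorem meetIrred_snakeHat_iff {x : SnakeHat n w} :
    MeetIrred x ↔ x.1 ≠ 2 * n + 4 ∧ ∀ m ≤ n, x.1 ≠ 2 * m + 3 := by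
  constructor
  · intro hx
    refine ⟨fun h ↦ hx.1 (snakeHat_eq_top_iff.2 h ▸ isTop_top), fun m hm h ↦ ?_⟩
    have hbound : 2 * m + 3 < 2 * n + 6 := by omega
    obtain rfl : x = snakeHatMk n w (2 * m + 3) hbound := snakeHat_ext h
    rcases hx.2 _ _ (isGLB_square hm) with h | h <;>
      simpa [snakeHatMk] using congrArg Fin.val h
  · rintro ⟨htop, hodd⟩
    rcases label_cases x.2 with hx | hx | hx | ⟨m, hm, hx⟩ | ⟨m, hm, hx⟩
    · refine meetIrred_of_forall_snakeHatLE (b := 2 * (n + 1) + 1) (by omega) (.inl hx)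
        (by omega) fun c hc _ hne ↦ (snakeHatLE_odd_iff le_rfl).2 (by omega)
    · exact absurd hx htop
    · refine meetIrred_of_forall_snakeHatLE (b := 2 * n + 4) (by omega) (.inr (.inl rfl))
        (by omega) fun c _ hle hne ↦ .inr (.inl ?_)
      rw [hx] at hle hne
      exact (snakeHatLE_zero_iff.1 hle).resolve_right hne
    · rcases m with _ | m
      · refine meetIrred_of_forall_snakeHatLE (b := 0) (by omega)
          (hx ▸ (snakeHatLE_odd_iff hm).2 (by omega)) (by omega) fun c _ hle hne ↦ ?_
        rw [hx, snakeHatLE_odd_iff hm] at hle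
        exact snakeHatLE_zero_iff.2 (by omega)
      · exact absurd hx (hodd m (by omega))
    · have hside := snakeSide_eq_or w m
      refine meetIrred_of_forall_snakeHatLE (b := snakeSide w m) (by omega)
        (hx ▸ (snakeHatLE_even_iff hm).2 (.inr (snakeHatLE_refl (by omega)))) (by omega)
        fun c _ hle hne ↦ ?_
      rw [hx] at hle hne
      exact ((snakeHatLE_even_iff hm).1 hle).resolve_left hne

theorem exists_eq_even_of_not_le {y z : SnakeHat n w} (hzy : z.1 ≤ y.1) (hyz : ¬ y ≤ z)
    (hzy' : ¬ z ≤ y) : ∃ m ≤ n, y.1 = 2 * m + 2 := by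
  rcases label_cases y.2 with h | h | h | ⟨m, hm, h⟩ | h
  · exact absurd (.inl h) hyz
  · exact absurd (.inr (.inl h)) hzy'
  · exact absurd (snakeHat_ext (by omega) : y = z).le hyz
  · rw [snakeHat_le_iff, h, snakeHatLE_odd_iff hm] at hyz
    omega
  · exact h

theorem exists_forall_meetIrred_le_iff (y z : SnakeHat n w) :
    ∃ x, ∀ q, MeetIrred q → (x ≤ q ↔ y ≤ q ∨ z ≤ q) := by
  wlog hzy : z.1 ≤ y.1 generalizing y z
  · simpa only [or_comm] using this z y (by omega)
  by_cases hcomp : y ≤ z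
  · exact ⟨y, fun q _ ↦ by simpa using hcomp.trans⟩
  by_cases hcomp' : z ≤ y
  · exact ⟨z, fun q _ ↦ by simpa using hcomp'.trans⟩
  obtain ⟨m, hm, hym⟩ := exists_eq_even_of_not_le hzy hcomp hcomp'
  have hz : z.1 ≠ 2 * m + 2 := fun h ↦ hcomp (snakeHat_ext (by omega) : y = z).le
  have hx : ∀ u : SnakeHat n w,
      snakeHatMk n w (2 * m + 3) (by omega) ≤ u ↔ u.1 = 2 * n + 4 ∨ u.1 ≤ 2 * m + 3 := fun u ↦
    snakeHatLE_odd_iff (by omega : m + 1 ≤ n + 1)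
  refine ⟨snakeHatMk n w (2 * m + 3) (by omega), fun q hq ↦ ⟨fun hle ↦ ?_, ?_⟩⟩
  · obtain ⟨hqtop, hqodd⟩ := meetIrred_snakeHat_iff.1 hq
    have := hqodd m hm
    rw [hx] at hle
    rw [snakeHat_le_iff, snakeHat_le_iff, hym]
    rw [snakeHat_le_iff, hym] at hcomp
    exact snakeHatLE_even_or_of_not_le hm (by omega) hcomp (by omega) hqodd
  · rintro (h | h)
    · exact ((hx y).2 (by omega)).trans h
    · exact ((hx z).2 (by omega)).trans h

end SnakeLattice

section SnakeRelations

/-- The positions `i ≥ 2` at which the word changes letter. -/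
def turns (n : ℕ) (w : ℕ → Letter) : Finset ℕ :=
  (Finset.Icc 2 n).filter fun i ↦ w (i - 1) ≠ w i

/-- The relabelling of `P̂(w)` exchanging the incomparable elements `1` and `2` if `w` starts
with `L`; it makes the first letter irrelevant, so that only the turns of `w` remain. -/
def snakeLabel (w : ℕ → Letter) : Equiv.Perm ℕ :=
  if w 1 = Letter.L then Equiv.swap 1 2 else 1

variable {n m : ℕ} {w : ℕ → Letter}

theorem turns_subset_Icc : turns n w ⊆ Finset.Icc 2 n :=
  Finset.filter_subset _ _

theorem InV.add_one_notMem_turns (hw : InV n w) : ∀ k ∈ turns n w, k + 1 ∉ turns n w := by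
  simp only [turns, Finset.mem_filter, Finset.mem_Icc, Nat.add_sub_cancel]
  rintro k ⟨⟨hk, -⟩, hturn⟩ ⟨⟨-, hkn⟩, hturn'⟩
  obtain ⟨i, rfl⟩ : ∃ i, k = i + 1 := ⟨k - 1, by omega⟩
  exact (hw i (by omega) (by omega)).elim hturn hturn'

theorem snakeLabel_of_ne {y : ℕ} (h₁ : y ≠ 1) (h₂ : y ≠ 2) : snakeLabel w y = y := by
  unfold snakeLabel
  split
  exacts [Equiv.swap_apply_of_ne_of_ne h₁ h₂, rfl]

theorem snakeLabel_lt {y : ℕ} (hy : y < 2 * n + 6) : snakeLabel w y < 2 * n + 6 := by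
  unfold snakeLabel
  split
  · rw [Equiv.swap_apply_def]
    split_ifs <;> omega
  · exact hy

theorem snakeLabel_turnSide (hm : m ≤ n) :
    snakeLabel w (turnSide (turns n w) m) = snakeSide w m := by
  rcases (by omega : m = 0 ∨ m = 1 ∨ 2 ≤ m) with rfl | rfl | hm2
  · simp [turnSide, snakeSide, snakeLabel_of_ne]
  · by_cases h : w 1 = Letter.L <;> simp [turnSide, turns, snakeSide, snakeLabel, h]
  · have hside : turnSide (turns n w) m = snakeSide w m := by
      simp [turnSide, turns, snakeSide, hm, hm2, show m ≠ 1 by omega]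
    have := snakeSide_eq_or w m
    rw [hside, snakeLabel_of_ne (by omega) (by omega)]

theorem map_snakeLabel_sides (f : ℕ → ℝ) (m : ℕ) :
    f (snakeLabel w (2 * m + 1)) + f (snakeLabel w (2 * m + 2)) =
      f (2 * m + 1) + f (2 * m + 2) := by
  rcases m with _ | m
  · by_cases h : w 1 = Letter.L <;> simp [snakeLabel, h, add_comm]
  · rw [snakeLabel_of_ne (by omega) (by omega), snakeLabel_of_ne (by omega) (by omega)]

/-- The elements of `P̂(w)`, numbered so that its squares are those of the strip with turns at
`turns n w`. -/
def snakePoint (n : ℕ) (w : ℕ → Letter) (y : Fin (2 * n + 6)) : SnakeHat n w :=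
  snakeHatMk n w (snakeLabel w y) (snakeLabel_lt y.2)

theorem snakePoint_bijective : Function.Bijective (snakePoint n w) :=
  Function.Injective.bijective_of_finite (α := Fin (2 * n + 6)) fun _ _ h ↦
    Fin.ext ((snakeLabel w).injective (congrArg Fin.val h))

theorem downSum_snakePoint_turnSum (c : ℕ → ℝ) (u : SnakeHat n w) :
    downSum (snakePoint n w) (fun y ↦ turnSum n (turns n w) c y) u =
      ∑ m ∈ Finset.range (n + 1), if u.1 = 2 * m + 3 then c m else 0 := by
  classical
  let below (a : ℕ) : ℝ := if SnakeHatLE n w a u.1 then 1 else 0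
  calc downSum (snakePoint n w) (fun y ↦ turnSum n (turns n w) c y) u
    _ = ∑ y : Fin (2 * n + 6), turnSum n (turns n w) c y * below (snakeLabel w y) := by
      simp only [downSum, Finset.sum_filter, below, mul_ite, mul_one, mul_zero]
      rfl
    _ = ∑ m ∈ Finset.range (n + 1),
          c m * (below (2 * m + 3) + below (snakeSide w m) - below (2 * m + 1) -
            below (2 * m + 2)) := by
      rw [sum_turnSum_mul fun y ↦ below (snakeLabel w y)]
      refine Finset.sum_congr rfl fun m hm ↦ ?_
      rw [snakeLabel_turnSide (Finset.mem_range_succ_iff.1 hm),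
        snakeLabel_of_ne (by omega : 2 * m + 3 ≠ 1) (by omega), sub_sub, sub_sub,
        map_snakeLabel_sides below]
    _ = ∑ m ∈ Finset.range (n + 1), if u.1 = 2 * m + 3 then c m else 0 := by
      refine Finset.sum_congr rfl fun m hm ↦ ?_
      rw [snakeHatLE_square (Finset.mem_range_succ_iff.1 hm) u.1, mul_ite, mul_one, mul_zero]

/-- The vertices of the order polytope of `Q_w`, numbered like the elements of `P̂(w)`. -/
noncomputable def snakeVertex (n : ℕ) (w : ℕ → Letter) (y : Fin (2 * n + 6)) : SnakeQ n w → ℝ :=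
  irredVertex (snakePoint n w y)

theorem snakeVertex_injective : Function.Injective (snakeVertex n w) :=
  irredVertex_injective.comp snakePoint_bijective.injective

theorem range_snakeVertex : Set.range (snakeVertex n w) = OPVertexSet (SnakeQ n w) := by
  rw [← range_irredVertex exists_forall_meetIrred_le_iff]
  exact snakePoint_bijective.surjective.range_comp irredVertex

theorem affineRelations_snakeVertex :
    affineRelations (snakeVertex n w) = turnRelations n (turns n w) := by
  ext l
  rw [mem_turnRelations]
  unfold snakeVertex
  rw [mem_affineRelations_irredVertex_iff]
  constructor
  · rintro ⟨htop, hirred⟩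
    let c (m : ℕ) : ℝ :=
      if hm : m ≤ n then downSum (snakePoint n w) l (snakeHatMk n w (2 * m + 3) (by omega)) else 0
    refine ⟨c, downSum_injective (snakePoint_bijective (w := w)).injective (funext fun u ↦ ?_)⟩
    rw [downSum_snakePoint_turnSum]
    by_cases hu : ∃ m ≤ n, u.1 = 2 * m + 3
    · obtain ⟨m, hm, hu⟩ := hu
      have hbound : 2 * m + 3 < 2 * n + 6 := by omega
      obtain rfl : u = snakeHatMk n w (2 * m + 3) hbound := snakeHat_ext hu
      simp [snakeHatMk, c, hm]
    · push Not at hu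
      rw [Finset.sum_eq_zero fun m hm ↦ if_neg (hu m (Finset.mem_range_succ_iff.1 hm))]
      by_cases hutop : u.1 = 2 * n + 4
      · rw [snakeHat_eq_top_iff.2 hutop, htop]
      · exact hirred u (meetIrred_snakeHat_iff.2 ⟨hutop, hu⟩)
  · rintro ⟨c, rfl⟩
    simp only [downSum_snakePoint_turnSum]
    refine ⟨Finset.sum_eq_zero fun m _ ↦ if_neg ?_, fun q hq ↦ ?_⟩
    · rw [snakeHat_eq_top_iff.1 rfl]
      omega
    · exact Finset.sum_eq_zero fun m hm ↦
        if_neg ((meetIrred_snakeHat_iff.1 hq).2 m (Finset.mem_range_succ_iff.1 hm))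

theorem four_le_ncard_support_of_mem_turnRelations {l : Fin (2 * n + 6) → ℝ}
    (hl : l ∈ turnRelations n (turns n w)) (hl0 : l ≠ 0) : 4 ≤ l.support.ncard := by
  rw [← affineRelations_snakeVertex] at hl
  exact four_le_ncard_support_of_mem_affineRelations snakeVertex_injective
    (fun y ↦ irredVertex_eq_zero_or_one (snakePoint n w y)) hl hl0

theorem exists_isElementary_ncard_support_eq_four :
    ∃ l, IsElementary (turnRelations n (turns n w)) l ∧ l.support.ncard = 4 := by
  let l : Fin (2 * n + 6) → ℝ := fun y ↦ turnSquare (turns n w) 0 y.1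
  have hmem : l ∈ turnRelations n (turns n w) :=
    Submodule.subset_span ⟨0, by simp, rfl⟩
  have hne : l ≠ 0 := fun h ↦ by
    simpa [l, turnSquare, turnSide] using congrFun h ⟨0, by omega⟩
  have hle : l.support.ncard ≤ 4 := ncard_support_turnSquare_le
  exact ⟨l, isElementary_of_forall_ncard_le hmem hne fun l' hl' hl0 ↦
      hle.trans (four_le_ncard_support_of_mem_turnRelations hl' hl0),
    hle.antisymm (four_le_ncard_support_of_mem_turnRelations hmem hne)⟩

theorem exists_isElementary_ncard_support_eq_four_add (hw : InV n w) :
    ∃ l, IsElementary (turnRelations n (turns n w)) l ∧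
      l.support.ncard = 4 + 2 * (turns n w).card := by
  have hl := isElementary_turnSum_one turns_subset_Icc hw.add_one_notMem_turns
  exact ⟨_, hl, (hl.ncard_support_le_of_turnRelations turns_subset_Icc
    hw.add_one_notMem_turns).antisymm (le_ncard_support_turnSum_one turns_subset_Icc)⟩

end SnakeRelations

theorem stmt13 (n : ℕ) (w : ℕ → Letter) (hw : InV n w) :
    (∀ Z : Set (SnakeQ n w → ℝ), Z ⊆ OPVertexSet (SnakeQ n w) → IsAffCircuit Z →
      4 ≤ Z.ncard ∧
        Z.ncard ≤ 4 + 2 * ((Finset.Icc 2 n).filter fun i => w (i - 1) ≠ w i).card) ∧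
    (∃ Z : Set (SnakeQ n w → ℝ),
      Z ⊆ OPVertexSet (SnakeQ n w) ∧ IsAffCircuit Z ∧ Z.ncard = 4) ∧
    (∃ Z : Set (SnakeQ n w → ℝ),
      Z ⊆ OPVertexSet (SnakeQ n w) ∧ IsAffCircuit Z ∧
        Z.ncard = 4 + 2 * ((Finset.Icc 2 n).filter fun i => w (i - 1) ≠ w i).card) := by
  have hcircuit : ∀ l, IsElementary (turnRelations n (turns n w)) l →
      ∃ Z ⊆ OPVertexSet (SnakeQ n w), IsAffCircuit Z ∧ Z.ncard = l.support.ncard := by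
    rw [← affineRelations_snakeVertex, ← range_snakeVertex]
    exact fun l hl ↦ hl.exists_isAffCircuit snakeVertex_injective
  refine ⟨fun Z hZ hcirc ↦ ?_, ?_, ?_⟩
  · rw [← range_snakeVertex] at hZ
    obtain ⟨l, hl, hcard⟩ := hcirc.exists_isElementary snakeVertex_injective hZ
    rw [affineRelations_snakeVertex] at hl
    rw [← hcard]
    exact ⟨four_le_ncard_support_of_mem_turnRelations hl.1.1 hl.1.2,
      hl.ncard_support_le_of_turnRelations turns_subset_Icc hw.add_one_notMem_turns⟩
  · obtain ⟨l, hl, hcard⟩ := exists_isElementary_ncard_support_eq_four (n := n) (w := w)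
    exact hcard ▸ hcircuit l hl
  · obtain ⟨l, hl, hcard⟩ := exists_isElementary_ncard_support_eq_four_add hw
    exact hcard ▸ hcircuit l hl
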